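/- For all integers q ≥ 2, ℓ ≥ 1, n ≥ ℓ and i ≥ 1, the number N_{τ^δ}(n,ℓ,i) = |{x ∈ Z_q^n : |S_{τ^δ,ℓ}(x)| = i+1}| of words of length n whose single tandem deletion sphere has size i+1 equals Σ_{ν=i}^{⌊n/ℓ⌋−1} Σ_{ω=i−1}^{n−(ν+1)ℓ} q^ℓ · A(n−(ν+1)ℓ, ℓ−1, ω) · C(ω+1, i) · C(ν−1, i−1), where A(n', ℓ', ω) is the number of words in Z_q^{n'} whose runs of zeros all have length at most ℓ' and whose Hamming weight is ω, and C(·,·) denotes the binomial coefficient (with C(a,b) = 0 when a < b). -/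

import Mathlib

/-!
The `ℓ`-step derivative `φ_ℓ(x) = (u, v)` is a bijection, and a tandem deletion of `x` removes
`ℓ` consecutive zeros from `v`. Two such removals agree exactly when they take place in the same
zero run, so the sphere of `x` has size `i + 1` precisely when `i` zero runs of `v` have length at
least `ℓ`, and `u` contributes a free factor `q ^ ℓ`.

A word of weight `ω` is a sequence of `ω + 1` zero runs separated by nonzero letters. Weighting it
by `∏ f (k / ℓ)` over its run lengths `k` gives the generating function
`((q - 1) X) ^ ω * (∑ f (k / ℓ) X ^ k) ^ (ω + 1)`. By division with remainder,
`∑ f (k / ℓ) X ^ k = (1 + ⋯ + X ^ (ℓ - 1)) * ∑ f s X ^ (ℓ s)`. The remainders yield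
`A(m - ν ℓ, ℓ - 1, ω)`. For `f s = Y` when `s ≥ 1` and `f 0 = 1`, the quotients yield
`(1 + Y X / (1 - X)) ^ (ω + 1)`, whose `Y ^ i X ^ ν` coefficient is
`C(ω + 1, i) C(ν - 1, i - 1)`.
-/

namespace DupPaper

variable {α : Type*}

/-- `y` is obtained from `x` by one tandem duplication of length `ℓ`. -/
def TDup (ℓ : ℕ) (x y : List α) : Prop :=
  ∃ u v w : List α, v.length = ℓ ∧ x = u ++ v ++ w ∧ y = u ++ v ++ v ++ w

/-- `y` is obtained from `x` by one tandem deletion of length `ℓ`. -/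
def TDel (ℓ : ℕ) (x y : List α) : Prop :=
  ∃ u v w : List α, v.length = ℓ ∧ x = u ++ v ++ v ++ w ∧ y = u ++ v ++ w

/-- `y` is obtained from `x` by one palindromic duplication of length `ℓ`. -/
def PDup (ℓ : ℕ) (x y : List α) : Prop :=
  ∃ u v w : List α, v.length = ℓ ∧ x = u ++ v ++ w ∧ y = u ++ v ++ v.reverse ++ w

/-- `y` is obtained from `x` by one palindromic deletion of length `ℓ`. -/
def PDel (ℓ : ℕ) (x y : List α) : Prop :=
  ∃ u v w : List α, v.length = ℓ ∧ x = u ++ v ++ v.reverse ++ w ∧ y = u ++ v ++ w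

/-- `y` is reached from `x` by exactly `k` steps of the relation `rel`. -/
def reachK (rel : List α → List α → Prop) : ℕ → List α → List α → Prop
  | 0, x, y => x = y
  | k + 1, x, y => ∃ z, rel x z ∧ reachK rel k z y

/-- The sphere of all words reachable from `x` by at most `t` operations of type `rel`
(in particular it contains `x` itself). -/
def sphere (rel : List α → List α → Prop) (t : ℕ) (x : List α) : Set (List α) :=
  {y | ∃ k ≤ t, reachK rel k x y}

/-- A code `C` is `t`-error correcting for the error type `rel` if distinct codewords have
disjoint spheres. -/
def Correcting (rel : List α → List α → Prop) (t : ℕ) (C : Set (List α)) : Prop :=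
  ∀ c₁ ∈ C, ∀ c₂ ∈ C, (sphere rel t c₁ ∩ sphere rel t c₂).Nonempty → c₁ = c₂

/-- The list of maximal runs (maximal blocks of identical consecutive symbols) of a word. -/
def runs [DecidableEq α] : List α → List (List α)
  | [] => []
  | a :: rest =>
    match runs rest with
    | [] => [[a]]
    | r :: rs => if r.head? = some a then (a :: r) :: rs else [a] :: r :: rs

/-- `r(x)`: the number of runs of `x`. -/
def numRuns [DecidableEq α] (x : List α) : ℕ := (runs x).length

/-- `r_i(x)`: the number of runs of `x` of length exactly `i`. -/
def numRunsEq [DecidableEq α] (x : List α) (i : ℕ) : ℕ :=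
  ((runs x).filter (fun r => r.length = i)).length

/-- `r_{≥ i}(x)`: the number of runs of `x` of length at least `i`. -/
def numRunsGe [DecidableEq α] (x : List α) (i : ℕ) : ℕ :=
  ((runs x).filter (fun r => i ≤ r.length)).length

/-- `r_{I,2}(x)`: the number of runs of length exactly `2` located in the interior of `x`,
i.e. runs that are neither the first nor the last run of `x`. -/
def numInteriorRuns2 [DecidableEq α] (x : List α) : ℕ :=
  ((((runs x).drop 1).dropLast).filter (fun r => r.length = 2)).length

/-- The second component `v` of the `ℓ`-step derivative `φ_ℓ(x) = (u, v)`: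
`v = (x_{ℓ+1}, …, x_n) − (x_1, …, x_{n−ℓ})` componentwise in `Z_q`. -/
def derivV (q ℓ : ℕ) (x : List (ZMod q)) : List (ZMod q) :=
  List.zipWith (· - ·) (x.drop ℓ) x

/-- Hamming weight: the number of nonzero entries. -/
def wtH {q : ℕ} (v : List (ZMod q)) : ℕ := (v.filter (fun a => a ≠ 0)).length

/-- The lengths `(m_0, m_1, …, m_p)` of the (possibly empty) maximal zero runs of `v`,
where `v = (0^{m_0}, w_1, 0^{m_1}, w_2, …, w_p, 0^{m_p})` with all `w_i ≠ 0`. -/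
def zeroRunLengths {q : ℕ} : List (ZMod q) → List ℕ
  | [] => [0]
  | a :: rest =>
    let t := zeroRunLengths rest
    if a = 0 then
      match t with
      | [] => [1]
      | m :: ms => (m + 1) :: ms
    else 0 :: t

/-- The `ℓ`-zero signature `σ_ℓ(v) = (⌊m_0/ℓ⌋, …, ⌊m_p/ℓ⌋)` of `v = derivV q ℓ x`. -/
def sig (q ℓ : ℕ) (x : List (ZMod q)) : List ℕ :=
  (zeroRunLengths (derivV q ℓ x)).map (· / ℓ)

/-- The trunk `μ_ℓ(v)`: every maximal zero run of length `m` is shortened to length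
`m mod ℓ`. -/
def trunk (q ℓ : ℕ) (v : List (ZMod q)) : List (ZMod q) :=
  ((runs v).map (fun r =>
    if r.head? = some (0 : ZMod q) then List.replicate (r.length % ℓ) (0 : ZMod q) else r)).flatten

/-- The root `ρ_ℓ(x) = (u, μ_ℓ(v))` where `φ_ℓ(x) = (u, v)` is the `ℓ`-step derivative. -/
def root (q ℓ : ℕ) (x : List (ZMod q)) : List (ZMod q) × List (ZMod q) :=
  (x.take ℓ, trunk q ℓ (derivV q ℓ x))

/-- `ℓ1`-distance of two lists of naturals. -/
def l1diff (a b : List ℕ) : ℕ := (List.zipWith (fun s t => max s t - min s t) a b).sum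

/-- The tandem duplication distance `d_{τ,ℓ}`. -/
def tdDist (q ℓ : ℕ) (x₁ x₂ : List (ZMod q)) : ℕ∞ :=
  if root q ℓ x₁ = root q ℓ x₂ then (l1diff (sig q ℓ x₁) (sig q ℓ x₂) : ℕ∞) else ⊤

/-- The palindromic duplication `π_{i,ℓ}(x) = (u v v^R w)` at position `i`,
where `x = (u v w)`, `|u| = i`, `|v| = ℓ`. -/
def pdupAt (i ℓ : ℕ) (x : List α) : List α :=
  x.take (i + ℓ) ++ ((x.drop i).take ℓ).reverse ++ x.drop (i + ℓ)

/-- The result `(u v w)` of the palindromic deletion `π^δ_{i,ℓ}` applied to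
`x = (u v v^R w)` with `|u| = i`, `|v| = ℓ`. -/
def pdelAt (i ℓ : ℕ) (x : List α) : List α :=
  x.take (i + ℓ) ++ x.drop (i + 2 * ℓ)

/-- The palindromic deletion `π^δ_{i,ℓ}` is defined at position `i` of `x`, i.e. `x` has the
form `(u v v^R w)` with `|u| = i` and `|v| = ℓ`. -/
def PDelDefinedAt (q ℓ i : ℕ) (x : List (ZMod q)) : Prop :=
  ∃ u v w : List (ZMod q), u.length = i ∧ v.length = ℓ ∧ x = u ++ v ++ v.reverse ++ w

/-- `A(n', ℓ', ω)`: the number of words in `Z_q^{n'}` whose maximal zero runs all have length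
at most `ℓ'` and whose Hamming weight is `ω`. -/
noncomputable def Acount (q n' ℓ' ω : ℕ) : ℕ :=
  {x : Fin n' → ZMod q | wtH (List.ofFn x) = ω ∧
    ∀ r ∈ runs (List.ofFn x), r.head? = some (0 : ZMod q) → r.length ≤ ℓ'}.ncard

/-- Integer binomial coefficient with the conventions `C(a,b) = 0` for `a ≥ 0 > b` or
`0 ≤ a < b`, `C(-1,-1) = 1`, and `C(a,-1) = 0` for `a ≥ 0`. -/
def ichoose (a b : ℤ) : ℕ :=
  if a = -1 ∧ b = -1 then 1
  else if 0 ≤ a ∧ 0 ≤ b then Nat.choose a.toNat b.toNat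
  else 0

/-- `r^{(0)}(A^π_ℓ(x))`: the number of maximal blocks of consecutive all-zero columns of the
matrix `A^π_ℓ(x) ∈ Z_q^{ℓ × (n−2ℓ+1)}` whose entry in row `s` and column `c`
(`1 ≤ s ≤ ℓ`, `1 ≤ c ≤ n−2ℓ+1`) is `x_{2ℓ+c−s} − x_{c+s−1}`. -/
def zeroColBlocks (q ℓ n : ℕ) (x : List (ZMod q)) : ℕ :=
  ((runs ((List.range (n - 2 * ℓ + 1)).map (fun c =>
      (List.range ℓ).all (fun s =>
        x.getD (2 * ℓ + c - s - 1) (0 : ZMod q) = x.getD (c + s) (0 : ZMod q))))).filter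
    (fun r => r.head? = some true)).length

section PowerSeries

open PowerSeries

lemma coeff_coeff_one_add_C_X_mul_pow {K : Type*} [CommSemiring K] (φ : K⟦X⟧)
    (N ν i : ℕ) :
    (coeff ν ((1 + C Polynomial.X * map Polynomial.C φ) ^ N)).coeff i =
      N.choose i * coeff ν (φ ^ i) := by
  have term (j : ℕ) : (coeff ν ((C Polynomial.X * map Polynomial.C φ) ^ j *
      (N.choose j : (Polynomial K)⟦X⟧))).coeff i =
        if j = i then N.choose j * coeff ν (φ ^ j) else 0 := by
    have : (C Polynomial.X * map Polynomial.C φ) ^ j * (N.choose j : (Polynomial K)⟦X⟧) =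
        C (Polynomial.X ^ j) * map Polynomial.C ((N.choose j : K⟦X⟧) * φ ^ j) := by
      simp only [mul_pow, map_mul, map_pow, map_natCast]
      ring
    rw [this, coeff_C_mul, coeff_map, mul_comm, Polynomial.coeff_C_mul_X_pow,
      ← map_natCast (C (R := K)), coeff_C_mul]
    simp only [eq_comm]
  rw [add_comm, add_pow]
  simp only [one_pow, mul_one, map_sum, Polynomial.finsetSum_coeff, term]
  rw [Finset.sum_ite_eq', ite_eq_left_iff]
  intro h
  rw [Nat.choose_eq_zero_of_lt (by simpa using h), Nat.cast_zero, zero_mul]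

variable {K : Type*} [CommRing K]

lemma coeff_mul_expand {ℓ : ℕ} (hℓ : ℓ ≠ 0) (φ ψ : K⟦X⟧) (n : ℕ) :
    coeff n (φ * expand ℓ hℓ ψ) =
      ∑ ν ∈ Finset.range (n / ℓ + 1), coeff (n - ν * ℓ) φ * coeff ν ψ := by
  rw [mul_comm, coeff_mul, Finset.Nat.sum_antidiagonal_eq_sum_range_succ_mk]
  symm
  apply Finset.sum_of_injOn (fun ν => ν * ℓ)
  · exact (mul_left_injective₀ hℓ).injOn
  · intro ν hν
    simp only [Finset.coe_range, Set.mem_Iio, Nat.lt_succ_iff] at hν ⊢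
    exact (Nat.le_div_iff_mul_le (Nat.pos_of_ne_zero hℓ)).1 hν
  · intro k hk hk'
    suffices ¬ ℓ ∣ k by rw [coeff_expand_of_not_dvd _ _ _ this, zero_mul]
    rintro ⟨ν, rfl⟩
    refine hk' ⟨ν, ?_, mul_comm ν ℓ⟩
    rw [Finset.mem_range, Nat.lt_succ_iff] at hk
    rw [Finset.coe_range, Set.mem_Iio, Nat.lt_succ_iff, Nat.le_div_iff_mul_le (by omega)]
    rwa [mul_comm]
  · intro ν _
    rw [mul_comm ν ℓ, coeff_expand_mul, mul_comm]

lemma mk_comp_div {ℓ : ℕ} (hℓ : ℓ ≠ 0) (f : ℕ → K) :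
    mk (fun k => f (k / ℓ)) = mk (fun k => if k < ℓ then 1 else 0) * expand ℓ hℓ (mk f) := by
  ext k
  have key : ∀ ν ∈ Finset.range (k / ℓ + 1), k - ν * ℓ < ℓ ↔ k / ℓ = ν := by
    intro ν hν
    have hle : ν ≤ k / ℓ := Nat.lt_succ_iff.1 (Finset.mem_range.1 hν)
    have hpos := Nat.pos_of_ne_zero hℓ
    rw [Nat.sub_lt_iff_lt_add ((Nat.le_div_iff_mul_le hpos).1 hle), add_comm,
      ← Nat.succ_mul, ← Nat.div_lt_iff_lt_mul hpos]
    omega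
  rw [coeff_mul_expand, coeff_mk,
    Finset.sum_congr rfl fun ν hν => by rw [coeff_mk, coeff_mk, if_congr (key ν hν) rfl rfl]]
  simp

lemma coeff_X_mul_mk_one_pow_succ (j ν : ℕ) :
    coeff ν ((X * mk 1 : K⟦X⟧) ^ (j + 1)) = if j + 1 ≤ ν then ((ν - 1).choose j : K) else 0 := by
  rw [mul_pow, mk_one_pow_eq_mk_choose_add, coeff_X_pow_mul', coeff_mk]
  refine if_ctx_congr Iff.rfl (fun h => ?_) fun _ => rfl
  congr 2
  omega

end PowerSeries

section ZeroRuns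

variable {q : ℕ}

lemma zeroRunLengths_ne_nil (v : List (ZMod q)) : zeroRunLengths v ≠ [] := by
  cases v with
  | nil => simp [zeroRunLengths]
  | cons a v =>
    simp only [zeroRunLengths]
    split_ifs
    · split <;> simp
    · simp

lemma zeroRunLengths_zero_cons (v : List (ZMod q)) :
    zeroRunLengths (0 :: v) = ((zeroRunLengths v).headI + 1) :: (zeroRunLengths v).tail := by
  obtain ⟨h, t, hv⟩ := List.exists_cons_of_ne_nil (zeroRunLengths_ne_nil v)
  simp [zeroRunLengths, hv]

lemma zeroRunLengths_cons_of_ne {a : ZMod q} (ha : a ≠ 0) (v : List (ZMod q)) :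
    zeroRunLengths (a :: v) = 0 :: zeroRunLengths v := by
  simp [zeroRunLengths, ha]

lemma replicate_zero_prefix_iff {v : List (ZMod q)} {j : ℕ} :
    List.replicate j 0 <+: v ↔ j ≤ (zeroRunLengths v).headI := by
  induction v generalizing j with
  | nil => simp [zeroRunLengths]
  | cons a v ih =>
    cases j with
    | zero => simp
    | succ j =>
      rw [List.replicate_succ, List.cons_prefix_cons]
      by_cases ha : a = 0
      · simp [ha, zeroRunLengths_zero_cons, ih]
      · simp [Ne.symm ha, zeroRunLengths_cons_of_ne ha]

lemma exists_runs_cons [DecidableEq α] (a : α) (v : List α) :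
    ∃ r rs, runs (a :: v) = (a :: r) :: rs := by
  rw [runs]
  split
  · exact ⟨[], [], rfl⟩
  · split_ifs
    · exact ⟨_, _, rfl⟩
    · exact ⟨[], _, rfl⟩

lemma runs_cons_cons_self [DecidableEq α] {a : α} {v r : List α} {rs : List (List α)}
    (h : runs (a :: v) = (a :: r) :: rs) : runs (a :: a :: v) = (a :: a :: r) :: rs := by
  rw [runs, h]
  simp

lemma runs_cons_cons_of_ne [DecidableEq α] {a b : α} (hab : a ≠ b) (v : List α) :
    runs (a :: b :: v) = [a] :: runs (b :: v) := by
  obtain ⟨r, rs, h⟩ := exists_runs_cons b v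
  rw [runs, h]
  simp [hab.symm]

lemma map_length_filter_runs (v : List (ZMod q)) :
    ((runs v).filter (fun r => r.head? = some (0 : ZMod q))).map List.length =
      (zeroRunLengths v).filter (fun k => k ≠ 0) := by
  induction v with
  | nil => simp [runs, zeroRunLengths]
  | cons a v ih =>
    cases v with
    | nil => by_cases ha : a = 0 <;> simp [runs, zeroRunLengths, ha]
    | cons b v =>
      by_cases hab : a = b
      · subst hab
        obtain ⟨r, rs, hr⟩ := exists_runs_cons a v
        rw [runs_cons_cons_self hr]
        rw [hr] at ih
        by_cases ha : a = 0
        · subst ha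
          simp_all [zeroRunLengths_zero_cons]
        · simp_all [zeroRunLengths_cons_of_ne]
      · rw [runs_cons_cons_of_ne hab]
        by_cases ha : a = 0
        · subst ha
          have hb := Ne.symm hab
          simp_all [zeroRunLengths_zero_cons, zeroRunLengths_cons_of_ne]
        · simp_all [zeroRunLengths_cons_of_ne]

lemma forall_runs_length_le_iff (L : ℕ) (v : List (ZMod q)) :
    (∀ r ∈ runs v, r.head? = some (0 : ZMod q) → r.length ≤ L) ↔
      ∀ k ∈ zeroRunLengths v, k ≤ L := by
  calc (∀ r ∈ runs v, r.head? = some (0 : ZMod q) → r.length ≤ L)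
      ↔ ∀ k ∈ ((runs v).filter (fun r => r.head? = some (0 : ZMod q))).map List.length, k ≤ L := by
        simp only [List.forall_mem_map, List.mem_filter, decide_eq_true_eq, and_imp]
    _ ↔ ∀ k ∈ (zeroRunLengths v).filter (fun k => k ≠ 0), k ≤ L := by rw [map_length_filter_runs]
    _ ↔ ∀ k ∈ zeroRunLengths v, k ≤ L := by
        simp only [List.mem_filter, decide_eq_true_eq, and_imp]
        exact forall₂_congr fun k _ => by omega

/-- The number of maximal zero runs of `v` of length at least `ℓ`. -/
def numLongZeroRuns (ℓ : ℕ) (v : List (ZMod q)) : ℕ :=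
  (zeroRunLengths v).countP (ℓ ≤ ·)

lemma numLongZeroRuns_cons_of_ne {ℓ : ℕ} (hℓ : 1 ≤ ℓ) {a : ZMod q} (ha : a ≠ 0)
    (v : List (ZMod q)) : numLongZeroRuns ℓ (a :: v) = numLongZeroRuns ℓ v := by
  rw [numLongZeroRuns, zeroRunLengths_cons_of_ne ha, List.countP_cons_of_neg (by simp; omega)]
  rfl

lemma numLongZeroRuns_zero_cons (ℓ : ℕ) (v : List (ZMod q)) :
    numLongZeroRuns (ℓ + 1) (0 :: v) =
      numLongZeroRuns (ℓ + 1) v + if (zeroRunLengths v).headI = ℓ then 1 else 0 := by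
  obtain ⟨h, t, hv⟩ := List.exists_cons_of_ne_nil (zeroRunLengths_ne_nil v)
  simp only [numLongZeroRuns, zeroRunLengths_zero_cons, hv, List.countP_cons, List.headI_cons,
    List.tail_cons, decide_eq_true_eq]
  split_ifs <;> omega

end ZeroRuns

section ZeroDeletion

/-- The words obtained from `v` by removing a block of `ℓ` consecutive zeros. This is what a
tandem deletion does to the `ℓ`-step derivative. -/
def zeroDel [Zero α] (ℓ : ℕ) (v : List α) : Set (List α) :=
  {y | ∃ a b, v = a ++ List.replicate ℓ 0 ++ b ∧ y = a ++ b}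

lemma zeroDel_cons [Zero α] (ℓ : ℕ) (c : α) (v : List α) :
    zeroDel ℓ (c :: v) = {y | List.replicate ℓ 0 ++ y = c :: v} ∪ List.cons c '' zeroDel ℓ v := by
  ext y
  constructor
  · rintro ⟨_ | ⟨d, a⟩, b, h, rfl⟩
    · exact Or.inl (by simpa using h.symm)
    · simp only [List.cons_append, List.cons.injEq] at h
      obtain ⟨rfl, h⟩ := h
      exact Or.inr ⟨a ++ b, ⟨a, b, h, rfl⟩, rfl⟩
  · rintro (h | ⟨y, ⟨a, b, rfl, rfl⟩, rfl⟩)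
    · exact ⟨[], y, by simpa using h.symm, rfl⟩
    · exact ⟨c :: a, b, rfl, rfl⟩

variable {q : ℕ}

lemma zeroDel_cons_of_ne {ℓ : ℕ} (hℓ : 1 ≤ ℓ) {c : ZMod q} (hc : c ≠ 0) (v : List (ZMod q)) :
    zeroDel ℓ (c :: v) = List.cons c '' zeroDel ℓ v := by
  rw [zeroDel_cons, Set.union_eq_right]
  intro y hy
  obtain ⟨k, rfl⟩ := Nat.exists_eq_add_of_le' hℓ
  exact absurd (List.cons.inj hy).1.symm hc

lemma zeroDel_zero_cons_of_ne {ℓ : ℕ} {v : List (ZMod q)} (h : (zeroRunLengths v).headI ≠ ℓ) :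
    zeroDel (ℓ + 1) (0 :: v) = List.cons 0 '' zeroDel (ℓ + 1) v := by
  rw [zeroDel_cons, Set.union_eq_right]
  intro y hy
  have hv : List.replicate ℓ 0 ++ y = v := (List.cons.inj hy).2
  have hle : ℓ ≤ (zeroRunLengths v).headI := replicate_zero_prefix_iff.1 ⟨y, hv⟩
  -- The run extends beyond the block, so the block may be shifted one place to the right.
  obtain ⟨z, hz⟩ := replicate_zero_prefix_iff.2 (Nat.succ_le_of_lt (lt_of_le_of_ne' hle h))
  refine ⟨z, ⟨[], z, hz.symm, rfl⟩, ?_⟩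
  rw [← hv, List.replicate_succ', List.append_assoc] at hz
  exact List.append_cancel_left hz

lemma exists_zeroDel_zero_cons_eq_insert {ℓ : ℕ} {v : List (ZMod q)}
    (h : (zeroRunLengths v).headI = ℓ) :
    ∃ y ∉ List.cons 0 '' zeroDel (ℓ + 1) v,
      zeroDel (ℓ + 1) (0 :: v) = insert y (List.cons 0 '' zeroDel (ℓ + 1) v) := by
  obtain ⟨y, rfl⟩ := replicate_zero_prefix_iff.2 h.ge
  refine ⟨y, ?_, ?_⟩
  · rintro ⟨z, -, rfl⟩
    have hprefix : List.replicate (ℓ + 1) 0 <+: List.replicate ℓ 0 ++ 0 :: z :=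
      ⟨z, by rw [List.replicate_succ', List.append_assoc, List.singleton_append]⟩
    have := replicate_zero_prefix_iff.1 hprefix
    omega
  · rw [zeroDel_cons, Set.insert_eq]
    congr 1
    ext z
    simp [List.replicate_succ]

lemma encard_zeroDel {ℓ : ℕ} (hℓ : 1 ≤ ℓ) (v : List (ZMod q)) :
    (zeroDel ℓ v).encard = numLongZeroRuns ℓ v := by
  obtain ⟨k, rfl⟩ := Nat.exists_eq_add_of_le' hℓ
  induction v with
  | nil =>
    have : zeroDel (k + 1) ([] : List (ZMod q)) = ∅ :=
      Set.eq_empty_of_forall_notMem fun y ⟨a, b, h, _⟩ => by simp at h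
    simp [this, numLongZeroRuns, zeroRunLengths]
  | cons c v ih =>
    have himage : (List.cons c '' zeroDel (k + 1) v).encard = numLongZeroRuns (k + 1) v := by
      rw [List.cons_injective.encard_image, ih]
    by_cases hc : c = 0
    · subst hc
      rw [numLongZeroRuns_zero_cons]
      by_cases hk : (zeroRunLengths v).headI = k
      · obtain ⟨y, hy, heq⟩ := exists_zeroDel_zero_cons_eq_insert hk
        rw [heq, Set.encard_insert_of_notMem hy, himage, if_pos hk, Nat.cast_add, Nat.cast_one]
      · rw [zeroDel_zero_cons_of_ne hk, himage, if_neg hk, add_zero]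
    · rw [zeroDel_cons_of_ne hℓ hc, numLongZeroRuns_cons_of_ne hℓ hc, himage]

end ZeroDeletion

section TandemDeletion

lemma sphere_one (rel : List α → List α → Prop) (x : List α) :
    sphere rel 1 x = insert x {y | rel x y} := by
  ext y
  constructor
  · rintro ⟨k, hk, h⟩
    interval_cases k
    · exact Or.inl h.symm
    · obtain ⟨z, hz, rfl⟩ := h
      exact Or.inr hz
  · rintro (rfl | h)
    · exact ⟨0, zero_le_one, rfl⟩
    · exact ⟨1, le_rfl, y, h, rfl⟩

lemma TDel.length_add {ℓ : ℕ} {x y : List α} (h : TDel ℓ x y) : y.length + ℓ = x.length := by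
  obtain ⟨u, v, w, hv, rfl, rfl⟩ := h
  simp only [List.length_append]
  omega

lemma TDel.take_eq {ℓ : ℕ} {x y : List α} (h : TDel ℓ x y) : y.take ℓ = x.take ℓ := by
  obtain ⟨u, v, w, hv, rfl, rfl⟩ := h
  have htake (z : List α) : (u ++ v ++ z).take ℓ = (u ++ v).take ℓ :=
    List.take_append_of_le_length (by simp [hv])
  rw [List.append_assoc (u ++ v), htake, htake]

lemma exists_eq_append_of_add_le_length {a b c : ℕ} {x : List α} (h : a + b + c ≤ x.length) :
    ∃ t u v w, x = t ++ u ++ v ++ w ∧ t.length = a ∧ u.length = b ∧ v.length = c := by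
  refine ⟨x.take a, (x.drop a).take b, ((x.drop a).drop b).take c, ((x.drop a).drop b).drop c,
    ?_, ?_, ?_, ?_⟩
  · simp only [List.append_assoc, List.take_append_drop]
  all_goals
    simp only [List.length_take, List.length_drop]
    omega

lemma zipWith_sub_eq_replicate_zero_iff {G : Type*} [AddGroup G] {v w : List G}
    (h : v.length = w.length) :
    List.zipWith (· - ·) v w = List.replicate w.length 0 ↔ v = w := by
  induction v generalizing w with
  | nil => cases w <;> simp_all
  | cons a v ih => cases w <;> simp_all [List.replicate_succ, sub_eq_zero]

end TandemDeletion

section Derivative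

variable {q ℓ : ℕ}

lemma length_derivV (x : List (ZMod q)) : (derivV q ℓ x).length = x.length - ℓ := by
  simp [derivV]

lemma getElem_derivV (x : List (ZMod q)) {j : ℕ} (hj : j < (derivV q ℓ x).length) :
    (derivV q ℓ x)[j] = x[ℓ + j]'(by rw [length_derivV] at hj; omega) -
      x[j]'(by rw [length_derivV] at hj; omega) := by
  simp [derivV]

lemma derivV_append {v : List (ZMod q)} (hv : v.length = ℓ) (u : List (ZMod q)) :
    derivV q ℓ (u ++ v) = List.zipWith (· - ·) ((u ++ v).drop ℓ) u := by
  have hlen : ((u ++ v).drop ℓ).length = u.length := by simp [hv]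
  simpa [derivV] using
    List.zipWith_append (f := fun a b : ZMod q => a - b) (l₁' := []) (l₂' := v) hlen

lemma derivV_append_append {v : List (ZMod q)} (hv : v.length = ℓ) (u w : List (ZMod q)) :
    derivV q ℓ (u ++ v ++ w) = derivV q ℓ (u ++ v) ++ derivV q ℓ (v ++ w) := by
  have hdrop : (u ++ v ++ w).drop ℓ = (u ++ v).drop ℓ ++ w :=
    List.drop_append_of_le_length (by simp [hv])
  rw [derivV_append hv, derivV, derivV, hdrop, List.append_assoc,
    List.zipWith_append (by simp [hv]), List.drop_left' hv]

lemma derivV_append_of_length_eq {v w : List (ZMod q)} (hv : v.length = ℓ) (hw : w.length = ℓ) :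
    derivV q ℓ (v ++ w) = List.zipWith (· - ·) w v := by
  rw [derivV_append hw, List.drop_left' hv]

lemma derivV_append_block_append_block {v v' : List (ZMod q)} (hv : v.length = ℓ)
    (hv' : v'.length = ℓ) (u w : List (ZMod q)) :
    derivV q ℓ (u ++ v ++ v' ++ w) =
      derivV q ℓ (u ++ v) ++ List.zipWith (· - ·) v' v ++ derivV q ℓ (v' ++ w) := by
  rw [derivV_append_append hv' (u ++ v), derivV_append_append hv,
    derivV_append_of_length_eq hv hv']

lemma eq_of_take_eq_of_derivV_eq (hℓ : 1 ≤ ℓ) {x y : List (ZMod q)} (hlen : x.length = y.length)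
    (htake : x.take ℓ = y.take ℓ) (hderiv : derivV q ℓ x = derivV q ℓ y) : x = y := by
  refine List.ext_getElem hlen fun j hx hy => ?_
  induction j using Nat.strong_induction_on with
  | _ j ih =>
    rcases lt_or_ge j ℓ with hj | hj
    · have := List.getElem_of_eq htake (i := j) (by rw [List.length_take]; omega)
      simpa only [List.getElem_take] using this
    · obtain ⟨k, rfl⟩ := Nat.exists_eq_add_of_le hj
      have := List.getElem_of_eq hderiv (i := k) (by rw [length_derivV]; omega)
      rwa [getElem_derivV, getElem_derivV, ih k (by omega) (by omega) (by omega),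
        sub_left_inj] at this

lemma image_derivV_setOf_TDel (x : List (ZMod q)) :
    derivV q ℓ '' {y | TDel ℓ x y} = zeroDel ℓ (derivV q ℓ x) := by
  apply Set.Subset.antisymm
  · rintro _ ⟨_, ⟨u, v, w, hv, rfl, rfl⟩, rfl⟩
    refine ⟨derivV q ℓ (u ++ v), derivV q ℓ (v ++ w), ?_, derivV_append_append hv u w⟩
    rw [derivV_append_block_append_block hv hv, (zipWith_sub_eq_replicate_zero_iff rfl).2 rfl, hv]
  · rintro _ ⟨a, b, hx, rfl⟩
    have hlen := congrArg List.length hx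
    simp only [length_derivV, List.length_append, List.length_replicate] at hlen
    obtain ⟨u, v, v', w, rfl, hu, hv, hv'⟩ :=
      exists_eq_append_of_add_le_length (a := a.length) (b := ℓ) (c := ℓ) (x := x) (by omega)
    rw [derivV_append_block_append_block hv hv', List.append_assoc, List.append_assoc] at hx
    obtain ⟨ha, hx⟩ := List.append_inj hx (by simp [length_derivV, hu, hv])
    obtain ⟨hzero, hb⟩ := List.append_inj hx (by simp [hv, hv'])
    obtain rfl : v' = v :=
      (zipWith_sub_eq_replicate_zero_iff (hv'.trans hv.symm)).1 (by rw [hzero, hv])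
    exact ⟨u ++ v' ++ w, ⟨u, v', w, hv, rfl, rfl⟩, by rw [derivV_append_append hv, ha, hb]⟩

lemma injOn_derivV_setOf_TDel (hℓ : 1 ≤ ℓ) (x : List (ZMod q)) :
    Set.InjOn (derivV q ℓ) {y | TDel ℓ x y} := by
  intro y hy z hz h
  have hlen : y.length = z.length := Nat.add_right_cancel (hy.length_add.trans hz.length_add.symm)
  exact eq_of_take_eq_of_derivV_eq hℓ hlen (hy.take_eq.trans hz.take_eq.symm) h

lemma ncard_sphere_TDel_one (hℓ : 1 ≤ ℓ) (x : List (ZMod q)) :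
    (sphere (TDel ℓ) 1 x).ncard = numLongZeroRuns ℓ (derivV q ℓ x) + 1 := by
  have hx : x ∉ {y | TDel ℓ x y} := fun h => by
    have := h.length_add
    omega
  rw [sphere_one, Set.ncard_def, Set.encard_insert_of_notMem hx,
    ← (injOn_derivV_setOf_TDel hℓ x).encard_image, image_derivV_setOf_TDel, encard_zeroDel hℓ,
    ← Nat.cast_one, ← Nat.cast_add, ENat.toNat_natCast]

/-- The `ℓ`-step derivative `φ_ℓ(x) = (u, v)` on words of length `ℓ + m`: the first `ℓ` letters
of `x` together with its `m` differences at distance `ℓ`. -/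
def stepDeriv (q ℓ m : ℕ) (x : Fin (ℓ + m) → ZMod q) : (Fin ℓ → ZMod q) × (Fin m → ZMod q) :=
  (fun j => x (Fin.castAdd m j), fun j => x (Fin.natAdd ℓ j) - x ⟨j, by omega⟩)

variable {m : ℕ}

lemma ofFn_stepDeriv_fst (x : Fin (ℓ + m) → ZMod q) :
    List.ofFn (stepDeriv q ℓ m x).1 = (List.ofFn x).take ℓ := by
  rw [List.ofFn_add, List.take_left' (List.length_ofFn)]
  rfl

lemma ofFn_stepDeriv_snd (x : Fin (ℓ + m) → ZMod q) :
    List.ofFn (stepDeriv q ℓ m x).2 = derivV q ℓ (List.ofFn x) :=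
  List.ext_getElem (by simp [length_derivV]) fun j _ _ => by
    simp [getElem_derivV, stepDeriv, Fin.natAdd]

lemma stepDeriv_bijective [NeZero q] (hℓ : 1 ≤ ℓ) : Function.Bijective (stepDeriv q ℓ m) := by
  refine (Fintype.bijective_iff_injective_and_card _).2 ⟨fun x y h => ?_, by simp [pow_add]⟩
  refine List.ofFn_injective (eq_of_take_eq_of_derivV_eq hℓ (by simp) ?_ ?_)
  · rw [← ofFn_stepDeriv_fst, ← ofFn_stepDeriv_fst, h]
  · rw [← ofFn_stepDeriv_snd, ← ofFn_stepDeriv_snd, h]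

lemma ncard_setOf_derivV [NeZero q] (hℓ : 1 ≤ ℓ) (P : List (ZMod q) → Prop) :
    {x : Fin (ℓ + m) → ZMod q | P (derivV q ℓ (List.ofFn x))}.ncard =
      q ^ ℓ * {v : Fin m → ZMod q | P (List.ofFn v)}.ncard := by
  have hpreimage : {x : Fin (ℓ + m) → ZMod q | P (derivV q ℓ (List.ofFn x))} =
      stepDeriv q ℓ m ⁻¹' (Set.univ ×ˢ {v | P (List.ofFn v)}) := by
    ext x
    simp [← ofFn_stepDeriv_snd]
  rw [hpreimage, Set.ncard_preimage_of_injective_subset_range (stepDeriv_bijective hℓ).injective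
    (by simp [(stepDeriv_bijective hℓ).surjective.range_eq]), Set.ncard_prod, Set.ncard_univ]
  simp

end Derivative

section Counting

variable {q : ℕ}

lemma prod_map_ite_eq_pow_countP {ι M : Type*} [CommMonoid M] (p : ι → Prop) [DecidablePred p]
    (y : M) (t : List ι) : (t.map fun k => if p k then y else 1).prod = y ^ t.countP p := by
  induction t with
  | nil => simp
  | cons a t ih => by_cases h : p a <;> simp [h, ih, pow_succ']

lemma wtH_zero_cons (v : List (ZMod q)) : wtH (0 :: v) = wtH v := by
  simp [wtH]

lemma wtH_cons_of_ne {a : ZMod q} (ha : a ≠ 0) (v : List (ZMod q)) :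
    wtH (a :: v) = wtH v + 1 := by
  simp [wtH, ha]

lemma wtH_ofFn_le {m : ℕ} (v : Fin m → ZMod q) : wtH (List.ofFn v) ≤ m :=
  (List.length_filter_le _ _).trans_eq List.length_ofFn

lemma mul_prod_tail_zeroRunLengths {K : Type*} [CommMonoid K] (f : ℕ → K) (v : List (ZMod q)) :
    f (zeroRunLengths v).headI * ((zeroRunLengths v).tail.map f).prod =
      ((zeroRunLengths v).map f).prod := by
  obtain ⟨h, t, hv⟩ := List.exists_cons_of_ne_nil (zeroRunLengths_ne_nil v)
  simp [hv]

variable [NeZero q]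

lemma card_univ_erase_zero : (Finset.univ.erase (0 : ZMod q)).card = q - 1 := by
  rw [Finset.card_erase_of_mem (Finset.mem_univ _), Finset.card_univ, ZMod.card]

lemma sum_ofFn_succ {M : Type*} [AddCommMonoid M] (m : ℕ) (F : List (ZMod q) → M) :
    ∑ v : Fin (m + 1) → ZMod q, F (List.ofFn v) =
      ∑ v : Fin m → ZMod q, F (0 :: List.ofFn v) +
        ∑ c ∈ Finset.univ.erase (0 : ZMod q), ∑ v : Fin m → ZMod q, F (c :: List.ofFn v) := by
  rw [← Equiv.sum_comp (Fin.consEquiv fun _ => ZMod q), Fintype.sum_prod_type,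
    ← Finset.add_sum_erase _ _ (Finset.mem_univ (0 : ZMod q))]
  simp only [Fin.consEquiv, Equiv.coe_fn_mk, List.ofFn_cons]

lemma sum_wtH_eq_zero_succ {M : Type*} [AddCommMonoid M] (m : ℕ) (F : List (ZMod q) → M) :
    ∑ v : Fin (m + 1) → ZMod q with wtH (List.ofFn v) = 0, F (List.ofFn v) =
      ∑ v : Fin m → ZMod q with wtH (List.ofFn v) = 0, F (0 :: List.ofFn v) := by
  simp only [Finset.sum_filter]
  rw [sum_ofFn_succ m fun v => if wtH v = 0 then F v else 0]
  simp only [wtH_zero_cons]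
  refine (congrArg _ (Finset.sum_eq_zero fun c hc => ?_)).trans (add_zero _)
  simp [wtH_cons_of_ne (Finset.ne_of_mem_erase hc)]

lemma sum_wtH_eq_succ_succ {M : Type*} [AddCommMonoid M] (m ω : ℕ) (F : List (ZMod q) → M) :
    ∑ v : Fin (m + 1) → ZMod q with wtH (List.ofFn v) = ω + 1, F (List.ofFn v) =
      ∑ v : Fin m → ZMod q with wtH (List.ofFn v) = ω + 1, F (0 :: List.ofFn v) +
        ∑ c ∈ Finset.univ.erase (0 : ZMod q),
          ∑ v : Fin m → ZMod q with wtH (List.ofFn v) = ω, F (c :: List.ofFn v) := by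
  simp only [Finset.sum_filter]
  rw [sum_ofFn_succ m fun v => if wtH v = ω + 1 then F v else 0]
  congr 1
  · simp only [wtH_zero_cons]
  · refine Finset.sum_congr rfl fun c hc => ?_
    simp only [wtH_cons_of_ne (Finset.ne_of_mem_erase hc), Nat.add_right_cancel_iff]

open PowerSeries

/-- Weighting the first run separately by `g` makes the induction on letters go through: reading
a leading zero replaces `g` by its shift. -/
lemma sum_headI_mul_prod_tail_zeroRunLengths {K : Type*} [CommSemiring K] (f g : ℕ → K)
    (m ω : ℕ) :
    ∑ v : Fin m → ZMod q with wtH (List.ofFn v) = ω,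
        g (zeroRunLengths (List.ofFn v)).headI *
          ((zeroRunLengths (List.ofFn v)).tail.map f).prod =
      coeff m (mk g * (((q - 1 : ℕ) : K⟦X⟧) * X * mk f) ^ ω) := by
  induction m generalizing g ω with
  | zero => cases ω <;> simp [wtH, zeroRunLengths]
  | succ m ih =>
    set φ : K⟦X⟧ := ((q - 1 : ℕ) : K⟦X⟧) * X * mk f with hφ
    let F : List (ZMod q) → K := fun v =>
      g (zeroRunLengths v).headI * ((zeroRunLengths v).tail.map f).prod
    have hzero (ω : ℕ) : ∑ v : Fin m → ZMod q with wtH (List.ofFn v) = ω, F (0 :: List.ofFn v) =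
        coeff (m + 1) (X * mk (fun k => g (k + 1)) * φ ^ ω) := by
      simp only [F, zeroRunLengths_zero_cons, List.headI_cons, List.tail_cons, mul_assoc X,
        coeff_succ_X_mul]
      exact ih (fun k => g (k + 1)) ω
    have hne {c : ZMod q} (hc : c ≠ 0) (ω : ℕ) :
        ∑ v : Fin m → ZMod q with wtH (List.ofFn v) = ω, F (c :: List.ofFn v) =
          coeff (m + 1) (X * (C (g 0) * (mk f * φ ^ ω))) := by
      simp only [F, zeroRunLengths_cons_of_ne hc, List.headI_cons, List.tail_cons,
        coeff_succ_X_mul, coeff_C_mul, ← ih, Finset.mul_sum, mul_prod_tail_zeroRunLengths]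
    have hg : mk g = X * mk (fun k => g (k + 1)) + C (g 0) := by
      simpa using eq_X_mul_shift_add_const (mk g)
    rw [hg, add_mul, map_add, ← hzero]
    cases ω with
    | zero =>
      rw [pow_zero, mul_one (C (g 0)), coeff_succ_C, add_zero]
      exact sum_wtH_eq_zero_succ m F
    | succ ω =>
      refine (sum_wtH_eq_succ_succ m ω F).trans (congrArg _ ?_)
      rw [Finset.sum_congr rfl fun c hc => hne (Finset.ne_of_mem_erase hc) ω, Finset.sum_const,
        card_univ_erase_zero, ← map_nsmul, nsmul_eq_mul, pow_succ]
      nth_rw 3 [hφ]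
      ring_nf

lemma sum_prod_map_zeroRunLengths {K : Type*} [CommSemiring K] (f : ℕ → K) (m ω : ℕ) :
    ∑ v : Fin m → ZMod q with wtH (List.ofFn v) = ω,
        ((zeroRunLengths (List.ofFn v)).map f).prod =
      coeff m ((((q - 1 : ℕ) : K⟦X⟧) * X) ^ ω * mk f ^ (ω + 1)) := by
  simp only [← mul_prod_tail_zeroRunLengths]
  rw [sum_headI_mul_prod_tail_zeroRunLengths]
  ring_nf

lemma natCast_Acount_eq_sum_prod (K : Type*) [CommSemiring K] (m L ω : ℕ) :
    (Acount q m L ω : K) = ∑ v : Fin m → ZMod q with wtH (List.ofFn v) = ω,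
      ((zeroRunLengths (List.ofFn v)).map fun k => if k ≤ L then 1 else 0).prod := by
  classical
  have hprod (t : List ℕ) : (t.map fun k => if k ≤ L then (1 : K) else 0).prod =
      if ∀ k ∈ t, k ≤ L then 1 else 0 := by
    simp only [← not_lt, ite_not, prod_map_ite_eq_pow_countP, zero_pow_eq, List.countP_eq_zero,
      decide_eq_true_eq]
  simp only [Acount, forall_runs_length_le_iff, hprod, Finset.sum_boole, Finset.filter_filter,
    Set.ncard_eq_toFinset_card', Set.toFinset_ofPred]

lemma Acount_eq_zero_of_lt {m L ω : ℕ} (h : m < ω) : Acount q m L ω = 0 := by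
  rw [Acount, Set.ncard_eq_zero]
  exact Set.eq_empty_of_forall_notMem fun v hv => ((wtH_ofFn_le v).trans_lt h).ne hv.1

/-- The signature `σ_ℓ` and the trunk `μ_ℓ` of a word are independent: the words of weight `ω` with
trunk of length `m - ν * ℓ` correspond to pairs of a word counted by `Acount` and a composition
of `ν` into `ω + 1` nonnegative parts. -/
theorem sum_prod_map_zeroRunLengths_div {K : Type*} [CommRing K] {ℓ : ℕ} (hℓ : 1 ≤ ℓ) (f : ℕ → K)
    (m ω : ℕ) :
    ∑ v : Fin m → ZMod q with wtH (List.ofFn v) = ω,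
        ((zeroRunLengths (List.ofFn v)).map fun k => f (k / ℓ)).prod =
      ∑ ν ∈ Finset.range (m / ℓ + 1),
        Acount q (m - ν * ℓ) (ℓ - 1) ω * coeff ν (mk f ^ (ω + 1)) := by
  have hshort (k : ℕ) : k ≤ ℓ - 1 ↔ k < ℓ := by omega
  simp only [natCast_Acount_eq_sum_prod K, sum_prod_map_zeroRunLengths, hshort]
  rw [mk_comp_div (by omega : ℓ ≠ 0), mul_pow (mk _), ← mul_assoc, ← map_pow, coeff_mul_expand]

lemma mk_ite_eq_one_add_C_mul {K : Type*} [CommSemiring K] (y : K) :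
    mk (fun k => if 1 ≤ k then y else 1) = 1 + C y * (X * mk 1) := by
  ext (_ | k) <;> simp [coeff_succ_X_mul, coeff_one]

lemma card_wtH_numLongZeroRuns_eq_sum_coeff {ℓ : ℕ} (hℓ : 1 ≤ ℓ) (m ω i : ℕ) :
    (Finset.card {v : Fin m → ZMod q | wtH (List.ofFn v) = ω ∧
        numLongZeroRuns ℓ (List.ofFn v) = i} : ℤ) =
      ∑ ν ∈ Finset.range (m / ℓ + 1), Acount q (m - ν * ℓ) (ℓ - 1) ω *
        ((ω + 1).choose i * coeff ν ((X * mk 1 : ℤ⟦X⟧) ^ i)) := by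
  have h := congrArg (Polynomial.coeff · i) <| sum_prod_map_zeroRunLengths_div (q := q) hℓ
    (fun s => if 1 ≤ s then (Polynomial.X : Polynomial ℤ) else 1) m ω
  have hmap : (X * mk 1 : (Polynomial ℤ)⟦X⟧) = map Polynomial.C (X * mk 1) := by
    ext (_ | k) <;> simp
  simp only [mk_ite_eq_one_add_C_mul, hmap, Nat.one_le_div_iff hℓ, prod_map_ite_eq_pow_countP,
    Polynomial.finsetSum_coeff, Polynomial.coeff_natCast_mul, coeff_coeff_one_add_C_X_mul_pow,
    Polynomial.coeff_X_pow, Finset.sum_boole, Finset.filter_filter] at h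
  rw [← h]
  simp only [numLongZeroRuns, eq_comm]

lemma card_wtH_numLongZeroRuns_eq_sum_choose {ℓ i : ℕ} (hℓ : 1 ≤ ℓ) (hi : 1 ≤ i) (m ω : ℕ) :
    Finset.card {v : Fin m → ZMod q | wtH (List.ofFn v) = ω ∧
        numLongZeroRuns ℓ (List.ofFn v) = i} =
      ∑ ν ∈ Finset.Icc i (m / ℓ),
        Acount q (m - ν * ℓ) (ℓ - 1) ω * (ω + 1).choose i * (ν - 1).choose (i - 1) := by
  obtain ⟨j, rfl⟩ := Nat.exists_eq_add_of_le' hi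
  have hIcc : Finset.Icc (j + 1) (m / ℓ) = {ν ∈ Finset.range (m / ℓ + 1) | j + 1 ≤ ν} := by
    grind
  apply Nat.cast_injective (R := ℤ)
  rw [card_wtH_numLongZeroRuns_eq_sum_coeff hℓ, hIcc, Finset.sum_filter, Nat.cast_sum]
  refine Finset.sum_congr rfl fun ν _ => ?_
  rw [coeff_X_mul_mk_one_pow_succ, Nat.add_sub_cancel]
  split_ifs <;> push_cast <;> ring

lemma ncard_numLongZeroRuns_eq {ℓ i : ℕ} (hℓ : 1 ≤ ℓ) (hi : 1 ≤ i) (m : ℕ) :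
    {v : Fin m → ZMod q | numLongZeroRuns ℓ (List.ofFn v) = i}.ncard =
      ∑ ν ∈ Finset.Icc i (m / ℓ), ∑ ω ∈ Finset.Icc (i - 1) (m - ν * ℓ),
        Acount q (m - ν * ℓ) (ℓ - 1) ω * (ω + 1).choose i * (ν - 1).choose (i - 1) := by
  classical
  have hwt (v : Fin m → ZMod q) : wtH (List.ofFn v) ∈ Finset.range (m + 1) :=
    Finset.mem_range_succ_iff.2 (wtH_ofFn_le v)
  rw [Set.ncard_eq_toFinset_card', Set.toFinset_ofPred,
    Finset.card_eq_sum_card_fiberwise fun v _ => hwt v]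
  simp only [Finset.filter_filter, and_comm (a := numLongZeroRuns ℓ _ = i),
    card_wtH_numLongZeroRuns_eq_sum_choose hℓ hi]
  rw [Finset.sum_comm]
  refine Finset.sum_congr rfl fun ν _ => (Finset.sum_subset ?_ fun ω _ hω => ?_).symm
  · intro ω hω
    grind
  · obtain hω | hω : m - ν * ℓ < ω ∨ ω + 1 < i := by grind
    · rw [Acount_eq_zero_of_lt hω, zero_mul, zero_mul]
    · rw [Nat.choose_eq_zero_of_lt hω, mul_zero, zero_mul]

end Counting

/-- The number of words of length `n` over `Z_q` whose single tandem deletion sphere has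
size `i + 1`. -/
theorem stmt15 (q ℓ n i : ℕ) (hq : 2 ≤ q) (hℓ : 1 ≤ ℓ) (hn : ℓ ≤ n) (hi : 1 ≤ i) :
    {x : Fin n → ZMod q | (sphere (TDel ℓ) 1 (List.ofFn x)).ncard = i + 1}.ncard =
      ∑ ν ∈ Finset.Icc i (n / ℓ - 1), ∑ ω ∈ Finset.Icc (i - 1) (n - (ν + 1) * ℓ),
        q ^ ℓ * Acount q (n - (ν + 1) * ℓ) (ℓ - 1) ω
          * Nat.choose (ω + 1) i * Nat.choose (ν - 1) (i - 1) := by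
  have : NeZero q := ⟨by omega⟩
  obtain ⟨m, rfl⟩ := Nat.exists_eq_add_of_le hn
  have hdiv : (ℓ + m) / ℓ - 1 = m / ℓ := by
    rw [Nat.add_div_left m hℓ, Nat.add_sub_cancel]
  have hsub (ν : ℕ) : ℓ + m - (ν + 1) * ℓ = m - ν * ℓ := by
    rw [add_mul, one_mul, add_comm (ν * ℓ), Nat.add_sub_add_left]
  calc {x : Fin (ℓ + m) → ZMod q | (sphere (TDel ℓ) 1 (List.ofFn x)).ncard = i + 1}.ncard
      = {x : Fin (ℓ + m) → ZMod q | numLongZeroRuns ℓ (derivV q ℓ (List.ofFn x)) = i}.ncard := by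
        simp only [ncard_sphere_TDel_one hℓ, Nat.add_right_cancel_iff]
    _ = q ^ ℓ * {v : Fin m → ZMod q | numLongZeroRuns ℓ (List.ofFn v) = i}.ncard :=
        ncard_setOf_derivV hℓ fun v => numLongZeroRuns ℓ v = i
    _ = _ := by
        simp only [ncard_numLongZeroRuns_eq hℓ hi, hdiv, hsub, Finset.mul_sum, mul_assoc]

end DupPaper
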